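/- Let X be a topological space. Then every element of U_c(X) is complemented in U_c(X) (for every A ∈ U_c(X) there exists B ∈ U_c(X) with A ∩ B = ∅ and A ∪ B = X, i.e. U_c(X) is a Boolean algebra) if and only if U_c(X) is weakly subfit (for every A ∈ U_c(X) with A ≠ ∅ there exists B ∈ U_c(X) with B ≠ X and A ∪ B = X). -/

import Mathlib

/-- `U_c(X)`: the collection of all subsets of a topological space `X` that are unions
of (arbitrary families of) closed subsets of `X`. -/
def Uc (X : Type*) [TopologicalSpace X] : Set (Set X) :=
  {A | ∃ 𝒞 : Set (Set X), (∀ C ∈ 𝒞, IsClosed C) ∧ A = ⋃₀ 𝒞}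

/-!
A union of closed sets is the same thing as a set stable under specialization. Suppose `x ⤳ y` and
apply weak subfitness to the closure of `y`: together with some proper `B` it covers `X`, so a
point outside `B` is a specialization of `y`, hence of `x`. Thus `x ∉ B`, and therefore `y ⤳ x`.
So weak subfitness makes specialization symmetric, and then complements of stable sets are stable.
-/

section

variable {X : Type*} [TopologicalSpace X] {A : Set X}

theorem mem_Uc_iff_stableUnderSpecialization : A ∈ Uc X ↔ StableUnderSpecialization A := by
  simp only [stableUnderSpecialization_iff_exists_sUnion_eq, Uc, Set.mem_ofPred_eq, eq_comm]

theorem mem_Uc_of_isClosed (hA : IsClosed A) : A ∈ Uc X :=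
  mem_Uc_iff_stableUnderSpecialization.2 hA.stableUnderSpecialization

theorem compl_mem_Uc [R0Space X] (hA : A ∈ Uc X) : Aᶜ ∈ Uc X := by
  rw [mem_Uc_iff_stableUnderSpecialization] at hA ⊢
  exact fun _ _ hxy hx hy => hx (hA hxy.symm hy)

theorem r0Space_of_forall_isClosed_exists_Uc_union_eq_univ
    (h : ∀ C : Set X, IsClosed C → C.Nonempty →
      ∃ B ∈ Uc X, B ≠ Set.univ ∧ C ∪ B = Set.univ) :
    R0Space X := by
  refine ⟨⟨fun x y hxy => ?_⟩⟩
  obtain ⟨B, hB, hB_ne, hcover⟩ := h (closure {y}) isClosed_closure ⟨y, subset_closure rfl⟩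
  have specializes_of_notMem : ∀ {w}, w ∉ B → y ⤳ w := fun {w} hw =>
    specializes_iff_mem_closure.2 ((Set.eq_univ_iff_forall.1 hcover w).resolve_right hw)
  obtain ⟨z, hz⟩ := (Set.ne_univ_iff_exists_notMem B).1 hB_ne
  have hxz : x ⤳ z := hxy.trans (specializes_of_notMem hz)
  have hx : x ∉ B := fun hx => hz (mem_Uc_iff_stableUnderSpecialization.1 hB hxz hx)
  exact specializes_of_notMem hx

end

/-- For a topological space `X`, every element of `U_c(X)` is
complemented in `U_c(X)` (i.e. `U_c(X)` is a Boolean algebra) if and only if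
`U_c(X)` is weakly subfit. -/
theorem Uc_boolean_iff_weaklySubfit
    {X : Type*} [TopologicalSpace X] :
    (∀ A ∈ Uc X, ∃ B ∈ Uc X, A ∩ B = (∅ : Set X) ∧ A ∪ B = Set.univ) ↔
    (∀ A ∈ Uc X, A ≠ (∅ : Set X) →
        ∃ B ∈ Uc X, B ≠ Set.univ ∧ A ∪ B = Set.univ) := by
  constructor
  · intro h A hA hA_ne
    obtain ⟨B, hB, hinter, hunion⟩ := h A hA
    refine ⟨B, hB, ?_, hunion⟩
    rintro rfl
    exact hA_ne (A.inter_univ.symm.trans hinter)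
  · intro h A hA
    have : R0Space X := r0Space_of_forall_isClosed_exists_Uc_union_eq_univ fun C hC hC_ne =>
      h C (mem_Uc_of_isClosed hC) hC_ne.ne_empty
    exact ⟨Aᶜ, compl_mem_Uc hA, A.inter_compl_self, A.union_compl_self⟩
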